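/- Let 𝔖 be a board with no isolated point and let m be an odd positive integer. Then V(𝔖,ℤ/mℤ) = 𝓕(𝔖,ℤ/mℤ): the (ℤ/mℤ)-submodule of the module of functions 𝔖 → ℤ/mℤ generated by the reductions modulo m of the moves of 𝔖 is the whole module. -/

import Mathlib

def dirs : Finset (ℤ × ℤ) := {(1,0), (-1,0), (0,1), (0,-1)}

def chi (X : ℤ × ℤ) : (ℤ × ℤ) → ℤ := fun Y => if Y = X then 1 else 0

def chiSet (I : Finset (ℤ × ℤ)) : (ℤ × ℤ) → ℤ := fun P => if P ∈ I then 1 else 0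

def IsMove (S : Finset (ℤ × ℤ)) (g : (ℤ × ℤ) → ℤ) : Prop :=
  ∃ P d : ℤ × ℤ, d ∈ dirs ∧ P ∈ S ∧ P + d ∈ S ∧ P + d + d ∈ S ∧
    g = chi P + chi (P + d) - chi (P + d + d)

def IsMiddle (S : Finset (ℤ × ℤ)) (Q : ℤ × ℤ) : Prop :=
  ∃ P d : ℤ × ℤ, d ∈ dirs ∧ P ∈ S ∧ P + d ∈ S ∧ P + d + d ∈ S ∧ Q = P + d

def Neighbor (S : Finset (ℤ × ℤ)) (A B : ℤ × ℤ) : Prop :=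
  ∃ d ∈ dirs, A ∈ S ∧ A + d ∈ S ∧ A + d + d ∈ S ∧ B = A + d + d

def NoIsolatedPoint (S : Finset (ℤ × ℤ)) : Prop :=
  ∀ P ∈ S, ∃ Q, Relation.EqvGen (Neighbor S) P Q ∧ IsMiddle S Q

def IsResourceCount (S : Finset (ℤ × ℤ)) (π : (ℤ × ℤ) → ℝ) : Prop :=
  ∀ P d : ℤ × ℤ, d ∈ dirs → P ∈ S → P + d ∈ S → P + d + d ∈ S →
    π (P + d + d) ≤ π P + π (P + d)

def LegalMove (S I : Finset (ℤ × ℤ)) (g : (ℤ × ℤ) → ℤ) (I' : Finset (ℤ × ℤ)) : Prop :=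
  ∃ P d : ℤ × ℤ, d ∈ dirs ∧ P ∈ S ∧ P + d ∈ S ∧ P + d + d ∈ S ∧
    g = chi P + chi (P + d) - chi (P + d + d) ∧
    P ∈ I ∧ P + d ∈ I ∧ P + d + d ∉ I ∧
    I' = (I \ {P, P + d}) ∪ {P + d + d}

def Transforms (S : Finset (ℤ × ℤ)) :
    List ((ℤ × ℤ) → ℤ) → Finset (ℤ × ℤ) → Finset (ℤ × ℤ) → Prop
  | [], I, J => I = J
  | g :: L, I, J => ∃ I', LegalMove S I g I' ∧ Transforms S L I' J

def boxProd (g₁ g₂ : (ℤ × ℤ) → ℤ) : Sym2 (ℤ × ℤ) → ℤ :=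
  Sym2.lift ⟨fun A B => if A = B then g₁ A * g₂ A else g₁ A * g₂ B + g₁ B * g₂ A, by
    intro A B
    by_cases h : A = B
    · subst h; rfl
    · simp only [if_neg h, if_neg (Ne.symm h)]; ring⟩

def moveAbs (g : (ℤ × ℤ) → ℤ) : (ℤ × ℤ) → ℤ := fun A => |g A|

def IsQMove (S : Finset (ℤ × ℤ)) (c : Sym2 (ℤ × ℤ) → ℤ) : Prop :=
  (∃ A g, A ∈ S ∧ IsMove S g ∧ g A = 0 ∧ c = boxProd (fun B => 2 * chi A B) g) ∨
  (∃ g, IsMove S g ∧ c = boxProd (moveAbs g) g)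

def StepList (S : Finset (ℤ × ℤ)) :
    List (Finset (ℤ × ℤ)) → List ((ℤ × ℤ) → ℤ) → Prop
  | [_], [] => True
  | I :: I' :: Ps, g :: L => LegalMove S I g I' ∧ StepList S (I' :: Ps) L
  | _, _ => False

def pOfSeq (A : ℤ × ℤ) : List (Finset (ℤ × ℤ)) → List ((ℤ × ℤ) → ℤ) → ℕ
  | I :: Ps, g :: L => (if g A ≠ 0 then 1 else if A ∈ I then 1 else 0) + pOfSeq A Ps L
  | _, _ => 0

def bothCount (A A' : ℤ × ℤ) : List ((ℤ × ℤ) → ℤ) → ℕ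
  | [] => 0
  | g :: L => (if g A ≠ 0 ∧ g A' ≠ 0 then 1 else 0) + bothCount A A' L

noncomputable def pagoda (P : ℤ × ℤ) : ℝ := ((Real.sqrt 5 - 1) / 2) ^ (P.1.natAbs + P.2.natAbs)

def suppSubmodule (m : ℕ) (S : Finset (ℤ × ℤ)) : Submodule (ZMod m) ((ℤ × ℤ) → ZMod m) where
  carrier := {h | ∀ P ∉ S, h P = 0}
  add_mem' := by
    intro a b ha hb P hP
    simp only [Pi.add_apply, ha P hP, hb P hP, add_zero]
  zero_mem' := by
    intro P hP
    rfl
  smul_mem' := by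
    intro c a ha P hP
    simp only [Pi.smul_apply, ha P hP, smul_zero]

/-- The move with extremities `P`, `P + 2d`, reduced modulo `m`, lies in the span of the moves. -/
lemma move_mem_span {S : Finset (ℤ × ℤ)} (m : ℕ) {P d : ℤ × ℤ} (hd : d ∈ dirs) (h₀ : P ∈ S)
    (h₁ : P + d ∈ S) (h₂ : P + d + d ∈ S) :
    (Pi.single P 1 + Pi.single (P + d) 1 - Pi.single (P + d + d) 1 : ℤ × ℤ → ZMod m) ∈
      Submodule.span (ZMod m)
        ((fun (f : (ℤ × ℤ) → ℤ) (P : ℤ × ℤ) => (f P : ZMod m)) '' {f | IsMove S f}) := by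
  refine Submodule.subset_span ⟨_, ⟨P, d, hd, h₀, h₁, h₂, rfl⟩, ?_⟩
  ext X
  simp [chi, Pi.single_apply]

lemma neg_mem_dirs {d : ℤ × ℤ} (hd : d ∈ dirs) : -d ∈ dirs := by
  revert d
  decide

/-- A move and its reverse add up to twice the middle point, so for odd `m` the middle point of a
move lies in the span of the moves. -/
lemma single_middle_mem_span {S : Finset (ℤ × ℤ)} {m : ℕ} (hm : Odd m) {P d : ℤ × ℤ}
    (hd : d ∈ dirs) (h₀ : P ∈ S) (h₁ : P + d ∈ S) (h₂ : P + d + d ∈ S) :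
    (Pi.single (P + d) 1 : ℤ × ℤ → ZMod m) ∈
      Submodule.span (ZMod m)
        ((fun (f : (ℤ × ℤ) → ℤ) (P : ℤ × ℤ) => (f P : ZMod m)) '' {f | IsMove S f}) := by
  have forward := move_mem_span m hd h₀ h₁ h₂
  have backward := move_mem_span (S := S) (P := P + d + d) m (neg_mem_dirs hd) h₂
    (by simpa using h₁) (by simpa using h₀)
  simp only [add_neg_cancel_right] at backward
  have two_isUnit : IsUnit (2 : ZMod m) := by
    exact_mod_cast (ZMod.isUnit_iff_coprime 2 m).2 hm.coprime_two_left
  rw [← Submodule.smul_mem_iff_of_isUnit _ two_isUnit]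
  convert add_mem forward backward using 1
  rw [two_smul]
  abel

/-- For odd `m`, the indicator functions of neighbors are congruent modulo the span of the
moves. -/
lemma single_mem_span_iff_of_neighbor {S : Finset (ℤ × ℤ)} {m : ℕ} (hm : Odd m) {A B : ℤ × ℤ}
    (h : Neighbor S A B) :
    (Pi.single A 1 : ℤ × ℤ → ZMod m) ∈ Submodule.span (ZMod m)
        ((fun (f : (ℤ × ℤ) → ℤ) (P : ℤ × ℤ) => (f P : ZMod m)) '' {f | IsMove S f}) ↔
      (Pi.single B 1 : ℤ × ℤ → ZMod m) ∈ Submodule.span (ZMod m)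
        ((fun (f : (ℤ × ℤ) → ℤ) (P : ℤ × ℤ) => (f P : ZMod m)) '' {f | IsMove S f}) := by
  obtain ⟨d, hd, h₀, h₁, h₂, rfl⟩ := h
  have difference :=
    sub_mem (move_mem_span m hd h₀ h₁ h₂) (single_middle_mem_span hm hd h₀ h₁ h₂)
  rw [add_sub_right_comm, add_sub_cancel_right] at difference
  exact ⟨fun hA => by simpa using sub_mem hA difference,
    fun hB => by simpa using add_mem difference hB⟩

lemma single_mem_span_moves {S : Finset (ℤ × ℤ)} (hS : NoIsolatedPoint S) {m : ℕ} (hm : Odd m)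
    {P : ℤ × ℤ} (hP : P ∈ S) :
    (Pi.single P 1 : ℤ × ℤ → ZMod m) ∈ Submodule.span (ZMod m)
      ((fun (f : (ℤ × ℤ) → ℤ) (P : ℤ × ℤ) => (f P : ZMod m)) '' {f | IsMove S f}) := by
  obtain ⟨Q, hPQ, R, d, hd, h₀, h₁, h₂, rfl⟩ := hS P hP
  have key := single_middle_mem_span hm hd h₀ h₁ h₂
  generalize R + d = Q at hPQ key
  refine Iff.mpr ?_ key
  clear key hP h₁
  induction hPQ with
  | rel A B h => exact single_mem_span_iff_of_neighbor hm h
  | refl A => exact Iff.rfl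
  | symm A B _ ih => exact ih.symm
  | trans A B C _ _ ih₁ ih₂ => exact ih₁.trans ih₂

/-- For a board with no isolated point and odd `m`, the reductions mod `m` of the
moves generate the whole module of functions `S → ℤ/mℤ`. -/
theorem span_moves_mod_odd (S : Finset (ℤ × ℤ)) (hS : NoIsolatedPoint S)
    (m : ℕ) (hm : Odd m) (hmpos : 0 < m) :
    Submodule.span (ZMod m)
        ((fun (f : (ℤ × ℤ) → ℤ) (P : ℤ × ℤ) => (f P : ZMod m)) '' {f | IsMove S f})
      = suppSubmodule m S := by
  apply le_antisymm
  · rw [Submodule.span_le]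
    rintro _ ⟨_, ⟨P, d, _, h₀, h₁, h₂, rfl⟩, rfl⟩ X hX
    have hX₀ : X ≠ P := fun h => hX (h ▸ h₀)
    have hX₁ : X ≠ P + d := fun h => hX (h ▸ h₁)
    have hX₂ : X ≠ P + d + d := fun h => hX (h ▸ h₂)
    simp [chi, hX₀, hX₁, hX₂]
  · intro f hf
    have expansion : f = ∑ P ∈ S, f P • (Pi.single P 1 : ℤ × ℤ → ZMod m) := by
      ext X
      by_cases hX : X ∈ S
      · simp [Finset.sum_apply, Pi.single_apply, hX]
      · simp [Finset.sum_apply, Pi.single_apply, hX, hf X hX]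
    rw [expansion]
    exact Submodule.sum_mem _ fun P hP =>
      Submodule.smul_mem _ _ (single_mem_span_moves hS hm hP)
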